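/- arXiv:2502.03491 — 3 statements merged into one kernel-verified Lean document; each statement's English description precedes it below -/
import Mathlib

section
/- Let d ≥ 1, let p : ℝᵈ → ℝ be strictly positive and twice continuously differentiable, let P be a symmetric real d×d matrix, and let m > 0, γ > 0, α ≥ 0. Define ρ(z,v) = p(z) · (2πm)^{-d/2} · exp(−‖v‖²/(2m)) for z, v ∈ ℝᵈ. Then ρ satisfies the stationary Fokker–Planck equation of the preconditioned HFHR underdamped Langevin dynamics dz = ((1/m) P v + α P ∇log p(z)) dt + √(2αP) dW_z, dv = (−(γ/m) P v + P ∇log p(z)) dt + √(2γP) dW_v: for every (z,v), div_z[((1/m) P v + α P ∇log p(z)) ρ(z,v)] + div_v[(−(γ/m) P v + P ∇log p(z)) ρ(z,v)] = α · div_z(P ∇_z ρ(z,v)) + γ · div_v(P ∇_v ρ(z,v)). Hence the stationary distribution is the product p(z) × N(v | 0, m I), in which z follows the target distribution p and v is an independent Gaussian. -/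
open Real Filter MeasureTheory Finset

/-- Partial derivative in the `i`-th coordinate of a scalar function on `Fin d → ℝ`. -/
noncomputable def pd {d : ℕ} (i : Fin d) (f : (Fin d → ℝ) → ℝ) (x : Fin d → ℝ) : ℝ :=
  fderiv ℝ f x (Pi.single i 1)

theorem pd_lin {d : ℕ} (i : Fin d) (f g : (Fin d → ℝ) → ℝ) (a b : ℝ) (x : Fin d → ℝ)
    (hf : DifferentiableAt ℝ f x) (hg : DifferentiableAt ℝ g x) :
    pd i (fun y => a * f y + b * g y) x = a * pd i f x + b * pd i g x := by
  unfold pd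
  rw [((hf.hasFDerivAt.const_mul a).fun_add (hg.hasFDerivAt.const_mul b)).fderiv]
  simp

theorem pd_cmul {d : ℕ} (i : Fin d) (f : (Fin d → ℝ) → ℝ) (a : ℝ) (x : Fin d → ℝ)
    (hf : DifferentiableAt ℝ f x) :
    pd i (fun y => a * f y) x = a * pd i f x := by
  unfold pd
  rw [(hf.hasFDerivAt.const_mul a).fderiv]
  simp

theorem pd_gauss {d : ℕ} (i : Fin d) (m : ℝ) (v : Fin d → ℝ) :
    pd i (fun v : Fin d → ℝ => Real.exp (-(∑ i, v i ^ 2) / (2 * m))) v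
      = -(v i / m) * Real.exp (-(∑ i, v i ^ 2) / (2 * m)) := by
  unfold pd
  have h1 : HasFDerivAt (fun v : Fin d → ℝ => ∑ i, v i ^ 2)
      (∑ i, (2 * v i) • (ContinuousLinearMap.proj i : (Fin d → ℝ) →L[ℝ] ℝ)) v := by
    apply HasFDerivAt.fun_sum
    intro j _
    have := ((ContinuousLinearMap.proj j : (Fin d → ℝ) →L[ℝ] ℝ).hasFDerivAt (x := v)).pow 2
    simpa using this
  have h2 := (h1.const_mul (-(1 / (2 * m)))).exp
  have e : (fun v : Fin d → ℝ => Real.exp (-(∑ i, v i ^ 2) / (2 * m)))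
      = fun v => Real.exp (-(1 / (2 * m)) * (∑ i, v i ^ 2)) := by
    funext w; congr 1; ring
  have e' := congrFun e v
  rw [e', e, h2.fderiv]
  simp [ContinuousLinearMap.sum_apply, Pi.single_apply]
  ring

/-- The product density `ρ(z,v) = p(z) ⬝ N(v | 0, m I)` satisfies the
stationary Fokker–Planck equation of the preconditioned HFHR underdamped Langevin dynamics
`dz = ((1/m) P v + α P ∇log p(z)) dt + √(2αP) dW_z`,
`dv = (−(γ/m) P v + P ∇log p(z)) dt + √(2γP) dW_v`:
`div_z[((1/m)Pv + αP∇log p)ρ] + div_v[(−(γ/m)Pv + P∇log p)ρ]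
  = α div_z(P ∇_z ρ) + γ div_v(P ∇_v ρ)`,
hence the stationary distribution is `p(z) × N(v | 0, m I)`. -/
theorem hfhr_preconditioned_stationary_distribution
    (d : ℕ) (hd : 1 ≤ d)
    (p : (Fin d → ℝ) → ℝ)
    (hp_pos : ∀ z, 0 < p z)
    (hp_smooth : ContDiff ℝ 2 p)
    (P : Matrix (Fin d) (Fin d) ℝ) (hP : P.IsSymm)
    (m γ α : ℝ) (hm : 0 < m) (hγ : 0 < γ) (hα : 0 ≤ α)
    (ρ : (Fin d → ℝ) → (Fin d → ℝ) → ℝ)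
    (hρ : ∀ z v, ρ z v =
      p z * (2 * π * m) ^ (-(d : ℝ) / 2) * Real.exp (-(∑ i, v i ^ 2) / (2 * m)))
    (slog : (Fin d → ℝ) → (Fin d → ℝ))
    (hslog : ∀ z i, slog z i = pd i (fun z' => Real.log (p z')) z) :
    ∀ z v : Fin d → ℝ,
      (∑ i, pd i
          (fun z' => ((1 / m) * P.mulVec v i + α * P.mulVec (slog z') i) * ρ z' v) z)
        + (∑ i, pd i
            (fun v' => (-(γ / m) * P.mulVec v' i + P.mulVec (slog z) i) * ρ z v') v)
      = α * (∑ i, pd i (fun z' => ∑ j, P i j * pd j (fun z'' => ρ z'' v) z') z)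
        + γ * (∑ i, pd i (fun v' => ∑ j, P i j * pd j (fun v'' => ρ z v'') v') v) := by
  intro z v
  obtain ⟨c, hc⟩ : ∃ c : ℝ, c = (2 * π * m) ^ (-(d : ℝ) / 2) := ⟨_, rfl⟩
  obtain ⟨E, hE⟩ : ∃ E : (Fin d → ℝ) → ℝ,
    E = fun v => Real.exp (-(∑ i, v i ^ 2) / (2 * m)) := ⟨_, rfl⟩
  have hρ' : ∀ z v, ρ z v = p z * c * E v := by
    intro z v; rw [hρ, hc, hE]
  have hEd : Differentiable ℝ E := by rw [hE]; fun_prop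
  have hEpd : ∀ i v, pd i E v = -(v i / m) * E v := by
    intro i v; rw [hE]; exact pd_gauss i m v
  have hpd : Differentiable ℝ p := hp_smooth.differentiable (by norm_num)
  have hppd : ∀ j, Differentiable ℝ (pd j p) := by
    intro j
    have : ContDiff ℝ 1 (fderiv ℝ p) := hp_smooth.fderiv_right (by norm_num)
    have h2 := this.differentiable (by norm_num)
    unfold pd
    fun_prop
  have hs : ∀ z j, slog z j * p z = pd j p z := by
    intro z j
    rw [hslog]
    unfold pd
    rw [((hpd z).hasFDerivAt.log (hp_pos z).ne').fderiv]
    have := (hp_pos z).ne'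
    simp
    field_simp
  have hz : ∀ j z, pd j (fun z'' => ρ z'' v) z = c * E v * pd j p z := by
    intro j z
    rw [← pd_cmul j p (c * E v) z (hpd z)]
    congr 1; funext y; rw [hρ']; ring
  have hv : ∀ j v, pd j (fun v'' => ρ z v'') v = p z * c * (-(v j / m) * E v) := by
    intro j v
    rw [← hEpd, ← pd_cmul j E _ v (hEd v)]
    congr 1; funext y; rw [hρ']
  simp only [hz, hv]
  have A : ∀ i, pd i
      (fun z' => ((1 / m) * P.mulVec v i + α * P.mulVec (slog z') i) * ρ z' v) z
      = (1 / m) * P.mulVec v i * (c * E v) * pd i p z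
        + α * pd i (fun z' => ∑ j, P i j * (c * E v * pd j p z')) z := by
    intro i
    rw [← pd_lin i p _ _ _ z (hpd z)]
    · congr 1; funext y
      simp only [← hs, hρ', Matrix.mulVec, dotProduct]
      rw [add_mul]
      congr 1
      · ring
      · simp only [Finset.mul_sum, Finset.sum_mul]
        refine Finset.sum_congr rfl fun j _ => ?_
        ring
    · fun_prop
  have B : ∀ i, pd i
      (fun v' => (-(γ / m) * P.mulVec v' i + P.mulVec (slog z) i) * ρ z v') v
      = P.mulVec (slog z) i * (p z * c) * (-(v i / m) * E v)
        + γ * pd i (fun v' => ∑ j, P i j * (p z * c * (-(v' j / m) * E v'))) v := by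
    intro i
    rw [← hEpd, ← pd_lin i E _ _ _ v (hEd v)]
    · congr 1; funext y
      simp only [hρ', Matrix.mulVec, dotProduct]
      rw [add_mul, add_comm]
      congr 1
      · ring
      · simp only [Finset.mul_sum, Finset.sum_mul]
        refine Finset.sum_congr rfl fun j _ => ?_
        ring
    · fun_prop
  simp only [A, B, Finset.sum_add_distrib, ← Finset.mul_sum]
  have C : (∑ i, (1 / m) * P.mulVec v i * (c * E v) * pd i p z)
      + ∑ i, P.mulVec (slog z) i * (p z * c) * (-(v i / m) * E v) = 0 := by
    simp only [← hs, Matrix.mulVec, dotProduct, Finset.mul_sum, Finset.sum_mul]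
    rw [Finset.sum_comm, ← Finset.sum_add_distrib]
    refine Finset.sum_eq_zero fun i _ => ?_
    rw [← Finset.sum_add_distrib]
    refine Finset.sum_eq_zero fun j _ => ?_
    rw [hP.apply i j]
    ring
  linarith
end

section
/- Let Γ > 0 and A ∈ ℝ with 0 < A < Γ/4, so that Δ := 1 − 4A/Γ ∈ (0,1); set δ := √Δ. Let x₀, q₀, C ∈ ℝ and define, for u = Γτ, the auxiliary functions ζ₁(u, Δ) = 1 − [1 − e^{−u/2}(sinh(uδ/2)/δ + cosh(uδ/2))] / (u(1 − Δ)/4) and ζ₂(u, Δ) = 2 e^{−u/2} sinh(uδ/2)/(uδ). Then the function defined for τ > 0 by x(τ) = x₀ + [q₀ ζ₂(Γτ, Δ) + (C − A x₀)(1 − ζ₁(Γτ, Δ))] τ coincides with the closed form x(τ) = C/A + (x₀ − C/A) e^{−Γτ/2}(cosh(Γτδ/2) + sinh(Γτδ/2)/δ) + (2 q₀/(Γδ)) e^{−Γτ/2} sinh(Γτδ/2), and this function extends continuously to τ = 0 with x(0) = x₀, is twice differentiable, satisfies x'(0) = q₀, and solves the damped harmonic oscillator equation x''(τ) + Γ x'(τ)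 + Γ A x(τ) = Γ C for all τ ≥ 0. That is, it is the mean of the exact solution of the FLD equation over a step in which C is held constant. -/
open Real Filter

theorem fld_aux_deriv (Γ δ K a b τ : ℝ) :
    HasDerivAt (fun t : ℝ => K + Real.exp (-Γ * t / 2) *
      (a * Real.cosh (Γ * t * δ / 2) + b * Real.sinh (Γ * t * δ / 2)))
      (0 + Real.exp (-Γ * τ / 2) *
      ((-Γ / 2 * a + Γ * δ / 2 * b) * Real.cosh (Γ * τ * δ / 2)
        + (-Γ / 2 * b + Γ * δ / 2 * a) * Real.sinh (Γ * τ * δ / 2))) τ := by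
  have h1 : HasDerivAt (fun t : ℝ => -Γ * t / 2) (-Γ / 2) τ := by
    simpa using ((hasDerivAt_id τ).const_mul (-Γ)).div_const 2
  have h2 : HasDerivAt (fun t : ℝ => Γ * t * δ / 2) (Γ * δ / 2) τ := by
    simpa using (((hasDerivAt_id τ).const_mul Γ).mul_const δ).div_const 2
  have h := (h1.exp.mul ((h2.cosh.const_mul a).add (h2.sinh.const_mul b))).const_add K
  refine h.congr_deriv ?_
  simp only [Pi.add_apply]
  ring

/-- In the overdamped regime `0 < A < Γ/4` (so `Δ = 1 − 4A/Γ ∈ (0,1)`,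
`δ = √Δ`), the mean `x(τ) = x₀ + [q₀ ζ₂(Γτ,Δ) + (C − A x₀)(1 − ζ₁(Γτ,Δ))] τ` of the
exact FLD solver step coincides for `τ > 0` with the closed form
`x(τ) = C/A + (x₀ − C/A) e^{−Γτ/2}(cosh(Γτδ/2) + sinh(Γτδ/2)/δ)
        + (2q₀/(Γδ)) e^{−Γτ/2} sinh(Γτδ/2)`,
which extends continuously to `τ = 0` with value `x₀`, is twice differentiable, has
`x'(0) = q₀`, and solves `x'' + Γ x' + Γ A x = Γ C` for all `τ ≥ 0`. -/
theorem fld_solver_mean_closed_form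
    (Γ A : ℝ) (hΓ : 0 < Γ) (hA₀ : 0 < A) (hA : A < Γ / 4)
    (Δ δ : ℝ) (hΔ : Δ = 1 - 4 * A / Γ) (hδ : δ = Real.sqrt Δ)
    (x₀ q₀ C : ℝ)
    (ζ₁ ζ₂ : ℝ → ℝ)
    (hζ₁ : ∀ u, ζ₁ u = 1 -
      (1 - Real.exp (-u / 2) * (Real.sinh (u * δ / 2) / δ + Real.cosh (u * δ / 2)))
        / (u * (1 - Δ) / 4))
    (hζ₂ : ∀ u, ζ₂ u = 2 * Real.exp (-u / 2) * Real.sinh (u * δ / 2) / (u * δ))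
    (xμ xcf : ℝ → ℝ)
    (hxμ : ∀ τ, xμ τ =
      x₀ + (q₀ * ζ₂ (Γ * τ) + (C - A * x₀) * (1 - ζ₁ (Γ * τ))) * τ)
    (hxcf : ∀ τ, xcf τ =
      C / A
        + (x₀ - C / A) * Real.exp (-Γ * τ / 2)
            * (Real.cosh (Γ * τ * δ / 2) + Real.sinh (Γ * τ * δ / 2) / δ)
        + (2 * q₀ / (Γ * δ)) * Real.exp (-Γ * τ / 2) * Real.sinh (Γ * τ * δ / 2)) :
    (∀ τ > (0 : ℝ), xμ τ = xcf τ) ∧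
    xcf 0 = x₀ ∧
    Tendsto xμ (nhdsWithin 0 (Set.Ioi 0)) (nhds x₀) ∧
    (∀ τ : ℝ, DifferentiableAt ℝ xcf τ) ∧
    (∀ τ : ℝ, DifferentiableAt ℝ (deriv xcf) τ) ∧
    deriv xcf 0 = q₀ ∧
    (∀ τ ≥ (0 : ℝ),
      deriv (deriv xcf) τ + Γ * deriv xcf τ + Γ * A * xcf τ = Γ * C) := by
  have hΔ0 : 0 < Δ := by
    rw [hΔ, sub_pos, div_lt_one hΓ]; linarith
  have hδ0 : 0 < δ := by rw [hδ]; exact Real.sqrt_pos.mpr hΔ0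
  have hδ2 : δ ^ 2 = Δ := by rw [hδ]; exact Real.sq_sqrt hΔ0.le
  have hδne := hδ0.ne'
  have hΓne := hΓ.ne'
  have hAne := hA₀.ne'
  have hrel : Γ * δ ^ 2 = Γ - 4 * A := by
    rw [hδ2, hΔ]; field_simp
  obtain ⟨a, ha⟩ : ∃ a, a = x₀ - C / A := ⟨_, rfl⟩
  obtain ⟨b, hb⟩ : ∃ b, b = a / δ + 2 * q₀ / (Γ * δ) := ⟨_, rfl⟩
  have hf : xcf = fun t : ℝ => C / A + Real.exp (-Γ * t / 2) *
      (a * Real.cosh (Γ * t * δ / 2) + b * Real.sinh (Γ * t * δ / 2)) := by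
    funext t
    rw [hxcf, hb, ha]; ring
  have hd1 : deriv xcf = fun τ : ℝ => 0 + Real.exp (-Γ * τ / 2) *
      ((-Γ / 2 * a + Γ * δ / 2 * b) * Real.cosh (Γ * τ * δ / 2)
        + (-Γ / 2 * b + Γ * δ / 2 * a) * Real.sinh (Γ * τ * δ / 2)) := by
    funext t
    rw [hf]; exact (fld_aux_deriv Γ δ _ a b t).deriv
  have hdiff : ∀ τ : ℝ, DifferentiableAt ℝ xcf τ := fun t => by
    rw [hf]; exact (fld_aux_deriv Γ δ _ a b t).differentiableAt
  have h0 : xcf 0 = x₀ := by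
    rw [hf]; simp [ha]
  have heq : ∀ τ > (0 : ℝ), xμ τ = xcf τ := by
    intro τ hτ
    have hτne := hτ.ne'
    have e1 : Γ * τ * (1 - Δ) / 4 = A * τ := by
      rw [hΔ]; field_simp; ring
    have e2 : -(Γ * τ) / 2 = -Γ * τ / 2 := by ring
    rw [hxμ, hxcf, hζ₁, hζ₂, e1, e2]
    field_simp
    ring
  refine ⟨heq, h0, ?_, hdiff, ?_, ?_, ?_⟩
  · have hc : Tendsto xcf (nhdsWithin 0 (Set.Ioi 0)) (nhds x₀) := by
      have := (hdiff 0).continuousAt.tendsto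
      rw [h0] at this
      exact this.mono_left nhdsWithin_le_nhds
    refine hc.congr' ?_
    filter_upwards [self_mem_nhdsWithin] with t ht
    exact (heq t ht).symm
  · intro t
    rw [hd1]; exact (fld_aux_deriv Γ δ _ _ _ t).differentiableAt
  · rw [hd1]
    simp [hb]
    field_simp
    ring
  · intro t _
    have hd2 := (fld_aux_deriv Γ δ 0 (-Γ / 2 * a + Γ * δ / 2 * b)
      (-Γ / 2 * b + Γ * δ / 2 * a) t).deriv
    rw [← hd1] at hd2
    rw [hd2, hd1, hf]
    have hCA : A * (C / A) = C := by field_simp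
    simp only
    linear_combination Γ * hCA + (Γ / 4 * Real.exp (-Γ * t / 2) *
      (a * Real.cosh (Γ * t * δ / 2) + b * Real.sinh (Γ * t * δ / 2))) * hrel
end

section
/- Let d ≥ 1 and T > 0, let s : ℝᵈ × (0, T] → ℝᵈ be continuous (the score function), and define ᾱ(t) = e^{−t} and σ(t) = √(e^{t} − 1) for t ∈ (0, T]. Suppose x : (0, T] → ℝᵈ is differentiable and satisfies the variance-preserving probability-flow ODE x'(t) = −(1/2)(x(t) + s(x(t), t)). Define the VE noise-prediction function ε(z, σ) := −√(1 − ᾱ(t(σ))) · s(√(ᾱ(t(σ))) z, t(σ)) with t(σ) = log(1 + σ²), and the transformed trajectory z(σ) := √(1 + σ²) · x(log(1 + σ²)) for σ ∈ (0, σ(T)]. Then z is differentiable and satisfies the variance-exploding backward ODE dz/dσ = ε(z(σ), σ). Hence the VP probability-flow ODE and the VE backward ODE are equivalent under the change of variables σ = √((1 − ᾱ)/ᾱ), z = x/√ᾱ. -/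
open Real Filter Set

/-- If `x` solves the variance-preserving probability-flow ODE
`x'(t) = −(1/2)(x(t) + s(x(t), t))` on `(0, T]` with `ᾱ(t) = e^{−t}`, then the
transformed trajectory `z(σ) = √(1+σ²) x(log(1+σ²))` solves the variance-exploding
backward ODE `dz/dσ = ε(z(σ), σ)` on `(0, σ(T)]` with `σ(T) = √(e^T − 1)`, where
`ε(z, σ) = −√(1 − ᾱ(t(σ))) s(√(ᾱ(t(σ))) z, t(σ))` and `t(σ) = log(1+σ²)`.  Hence the
VP probability-flow ODE and the VE backward ODE are equivalent under the change of
variables `σ = √((1−ᾱ)/ᾱ)`, `z = x/√ᾱ`. -/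
theorem vp_ode_to_ve_ode
    (d : ℕ) (hd : 1 ≤ d) (T : ℝ) (hT : 0 < T)
    (s : (Fin d → ℝ) → ℝ → (Fin d → ℝ))
    (hs : ContinuousOn (fun p : (Fin d → ℝ) × ℝ => s p.1 p.2)
      (Set.univ ×ˢ Set.Ioc 0 T))
    (x : ℝ → (Fin d → ℝ))
    (hx : ∀ t ∈ Set.Ioc (0 : ℝ) T,
      HasDerivAt x (-(1 / 2 : ℝ) • (x t + s (x t) t)) t)
    (ᾱ : ℝ → ℝ) (hᾱ : ∀ t, ᾱ t = Real.exp (-t))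
    (tof : ℝ → ℝ) (htof : ∀ σ, tof σ = Real.log (1 + σ ^ 2))
    (ε : (Fin d → ℝ) → ℝ → (Fin d → ℝ))
    (hε : ∀ zz σ, ε zz σ =
      -Real.sqrt (1 - ᾱ (tof σ)) • s (Real.sqrt (ᾱ (tof σ)) • zz) (tof σ))
    (z : ℝ → (Fin d → ℝ))
    (hz : ∀ σ, z σ = Real.sqrt (1 + σ ^ 2) • x (Real.log (1 + σ ^ 2))) :
    ∀ σ ∈ Set.Ioc (0 : ℝ) (Real.sqrt (Real.exp T - 1)),
      HasDerivAt z (ε (z σ) σ) σ := by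
  intro σ hσ
  obtain ⟨h0, h1⟩ := hσ
  have hp : 0 < 1 + σ ^ 2 := by positivity
  have hE : 0 ≤ Real.exp T - 1 := by
    have := Real.add_one_le_exp T
    linarith
  have h2 : σ ^ 2 ≤ Real.exp T - 1 := by
    have h3 := Real.sq_sqrt hE
    have h4 : σ ^ 2 ≤ Real.sqrt (Real.exp T - 1) ^ 2 := by gcongr
    linarith
  have ht : Real.log (1 + σ ^ 2) ∈ Set.Ioc (0 : ℝ) T := by
    refine ⟨Real.log_pos (by nlinarith), ?_⟩
    rw [Real.log_le_iff_le_exp hp]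
    linarith
  have hq : HasDerivAt (fun y : ℝ => 1 + y ^ 2) (2 * σ) σ := by
    simpa using (hasDerivAt_pow 2 σ).const_add 1
  have hsq := hq.sqrt hp.ne'
  have hlog := hq.log hp.ne'
  have hxc := (hx _ ht).scomp σ hlog
  have hmain := hsq.smul hxc
  have hzf : z = fun y => Real.sqrt (1 + y ^ 2) • x (Real.log (1 + y ^ 2)) := funext hz
  set r := Real.sqrt (1 + σ ^ 2) with hr
  have hrp : 0 < r := Real.sqrt_pos.mpr hp
  have hrr : r ^ 2 = 1 + σ ^ 2 := Real.sq_sqrt hp.le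
  have ha : ᾱ (tof σ) = (r ^ 2)⁻¹ := by
    rw [hᾱ, htof, Real.exp_neg, Real.exp_log hp, hrr]
  have hsa : Real.sqrt (ᾱ (tof σ)) = r⁻¹ := by
    rw [ha, ← inv_pow, Real.sqrt_sq (by positivity)]
  have hsb : Real.sqrt (1 - ᾱ (tof σ)) = σ / r := by
    have : 1 - ᾱ (tof σ) = (σ / r) ^ 2 := by
      rw [ha]
      field_simp
      linarith
    rw [this, Real.sqrt_sq (by positivity)]
  have harg : Real.sqrt (ᾱ (tof σ)) • z σ = x (Real.log (1 + σ ^ 2)) := by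
    rw [hsa, hz, ← hr, smul_smul, inv_mul_cancel₀ hrp.ne', one_smul]
  rw [hε, harg, hsb, htof, hzf]
  refine hmain.congr_deriv ?_
  ext i
  simp only [Function.comp, Pi.add_apply, Pi.smul_apply, smul_eq_mul, ← hr, ← hrr]
  field_simp
  ring
end
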